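/- BB(4) = 12: among all Turing machines with at most 4 states (in the model without a separate halting state) that halt on the all-zero tape, the maximum number of 1s in the computed word is exactly 12. -/

import Mathlib

/-- Head movement directions. -/
inductive Dir : Type
  | left | stay | right

/-- Displacement of the head for each direction. -/
def Dir.move : Dir → ℤ
  | .left => -1
  | .stay => 0
  | .right => 1

/-- A configuration of a Turing machine with state type `Q`: current state,
head position and the two-way infinite binary tape. -/
structure Cfg (Q : Type) where
  state : Q
  head : ℤ
  tape : ℤ → Bool

/-- One step of the machine with partial transition function `f`
(`none` if the machine halts, i.e. `f` is undefined on the current pair). -/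
def stepTM {Q : Type} (f : Q × Bool → Option (Q × Bool × Dir)) (c : Cfg Q) :
    Option (Cfg Q) :=
  (f (c.state, c.tape c.head)).map fun qbd =>
    ⟨qbd.1, c.head + qbd.2.2.move, Function.update c.tape c.head qbd.2.1⟩

/-- Running `t` steps (returns `none` if the machine halts strictly before `t` steps). -/
def stepsTM {Q : Type} (f : Q × Bool → Option (Q × Bool × Dir)) :
    ℕ → Cfg Q → Option (Cfg Q)
  | 0, c => some c
  | t + 1, c => (stepTM f c).bind (stepsTM f t)

/-- Initial configuration: initial state `q0`, head at `0`, all-zero tape. -/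
def initCfg {Q : Type} (q0 : Q) : Cfg Q := ⟨q0, 0, fun _ => false⟩

/-- The machine is halted in configuration `c`: the transition function is
undefined on the current (state, symbol) pair. -/
def Halted {Q : Type} (f : Q × Bool → Option (Q × Bool × Dir)) (c : Cfg Q) : Prop :=
  f (c.state, c.tape c.head) = none

/-- `w` is the tape contents from the leftmost 1 to the rightmost 1
(the empty word if the tape contains no 1). -/
def TapeWord (tape : ℤ → Bool) (w : List Bool) : Prop :=
  ∃ i : ℤ,
    (∀ k : ℕ, k < w.length → w.getD k false = tape (i + k)) ∧
    (∀ j : ℤ, tape j = true → i ≤ j ∧ j < i + w.length) ∧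
    (w ≠ [] → w.getD 0 false = true ∧ w.getLastD false = true)

/-- The machine with transition function `f` and initial state `q0`, started on
the all-zero tape, halts after exactly `t` steps computing the word `w`. -/
def Computes {Q : Type} (f : Q × Bool → Option (Q × Bool × Dir)) (q0 : Q)
    (w : List Bool) (t : ℕ) : Prop :=
  ∃ c : Cfg Q, stepsTM f t (initCfg q0) = some c ∧ Halted f c ∧ TapeWord c.tape w

/-!
A run of stationary instructions is merged with the move that ends it, which leaves machines that
move at every step. The price is that the cell scanned at the end may still be overwritten, so what
has to be shown for these machines is a bound on the ones off the scanned cell.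

An instruction that writes a zero on the blank tape leaves it blank, so up to a renaming of the
states and a reflection of the tape the first instruction writes a one, moves to the right and goes
to one of the first two states. From there a search runs through partial transition tables, which
are extended only when a simulation meets an undefined instruction. A machine that halts there is
checked directly. The last undefined instruction of a table need not be filled in, because a
machine with a complete table never halts.

The search abandons a table once it is certain that no extension of it halts, which is recognised
in two ways. Either a configuration recurs except for cells that were not visited in between, or
some finite set of local facts about the tape holds at the start, is closed under the moves of the
machine, and never leads to an undefined instruction.
-/

namespace BusyBeaver

open StateTransition Relation
open scoped Stream'

/-- The two sides of the head, which are also the possible moves. -/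
abbrev Side := Turing.Dir

/-- The side across the head from `σ`. -/
noncomputable def Side.opp (σ : Side) : Side := Turing.Dir.rec .right .left σ

/-- A Turing machine whose head moves at every step: `m q x` is the symbol written, the move and
the next state on reading `x` in state `q`. -/
abbrev Machine (Q : Type*) := Q → Bool → Option (Bool × Side × Q)

/-- A configuration seen from the head: both half-tapes are listed outwards from the scanned
cell. -/
@[ext]
structure Config (Q : Type*) where
  state : Q
  scanned : Bool
  left : Stream' Bool
  right : Stream' Bool

/-- The configuration in state `q` on the all-zero tape. -/
def start {Q : Type*} (q : Q) : Config Q := ⟨q, false, .const false, .const false⟩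

section Step

variable {Q : Type*} {m : Machine Q} {q q' : Q} {w : Bool}

/-- The configuration after writing `w`, moving the head and passing to a new state. -/
def Config.move (k : Config Q) (w : Bool) : Side → Q → Config Q
  | .left, q => ⟨q, k.left.head, k.left.tail, w :: k.right⟩
  | .right, q => ⟨q, k.right.head, w :: k.left, k.right.tail⟩

/-- One step of `m`, in the form of the transition functions of `StateTransition`. -/
def step (m : Machine Q) (k : Config Q) : Option (Config Q) :=
  (m k.state k.scanned).map fun i => k.move i.1 i.2.1 i.2.2

theorem step_of_eq_some {k : Config Q} {d : Side} (h : m k.state k.scanned = some (w, d, q)) :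
    step m k = some (k.move w d q) := by
  simp only [step, h, Option.map_some]

theorem step_eq_none {k : Config Q} : step m k = none ↔ m k.state k.scanned = none :=
  Option.map_eq_none_iff

theorem move_start (d : Side) : (start q).move false d q' = start q' := by
  have h : false :: Stream'.const false = Stream'.const false := (Stream'.const_eq false).symm
  cases d <;> simp only [Config.move, start, h] <;> rfl

end Step

/-- `m` does not halt from `k`. -/
def Diverges {Q : Type*} (m : Machine Q) (k : Config Q) : Prop := ¬ (eval (step m) k).Dom

theorem not_dom_eval_of_reaches₁_closed {σ : Type*} {f : σ → Option σ} {S : Set σ}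
    (hS : ∀ a ∈ S, ∃ b ∈ S, Reaches₁ f a b) {a : σ} (ha : a ∈ S) : ¬ (eval f a).Dom := by
  intro h
  obtain ⟨b, hb⟩ := Part.dom_iff_mem.mp h
  suffices hnone : ∀ c ∈ S, ¬ Reaches f a c from hnone a ha .refl
  refine evalInduction hb fun a' _ ih c hc hac => ?_
  obtain ⟨d, hd, hcd⟩ := hS c hc
  obtain ⟨a'', ha'', had⟩ := TransGen.head'_iff.mp (TransGen.trans_right hac hcd)
  exact ih a'' ha'' d hd had

theorem mem_eval_of_semiconj {σ τ : Type*} {f : σ → Option σ} {g : τ → Option τ} {φ : σ → τ}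
    (h : ∀ a, g (φ a) = (f a).map φ) {a b : σ} (hb : b ∈ eval f a) : φ b ∈ eval g (φ a) := by
  have hres : Respects f g fun a c => φ a = c := fun_respects.mpr fun a => by
    cases hfa : f a with
    | none => simp only [FRespects, h, hfa, Option.map_none]
    | some b => exact TransGen.single (by rw [h, hfa]; rfl)
  obtain ⟨_, rfl, hmem⟩ := tr_eval hres rfl hb
  exact hmem

/-- The number of ones off the scanned cell. -/
noncomputable def Config.ones {Q : Type*} (k : Config Q) : ℕ∞ :=
  {n | k.left n = true}.encard + {n | k.right n = true}.encard

/-- The bound on a halting configuration `k` of `m` that survives the elimination of stationary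
moves: the scanned cell may still be overwritten by stationary instructions, unless `m` is
undefined at the scanned pair only. -/
def WithinBound {Q : Type*} (m : Machine Q) (k : Config Q) : Prop :=
  k.ones ≤ 11 ∨ k.ones ≤ 12 ∧ k.scanned = false ∧
    ∀ q x, m q x = none → q = k.state ∧ x = k.scanned

/-- Started in state `q` on the all-zero tape, `m` diverges or halts within the bound. -/
def Bounded {Q : Type*} (m : Machine Q) (q : Q) : Prop :=
  ∀ k ∈ eval (step m) (start q), WithinBound m k

section Symmetries

variable {Q Q' : Type*}

/-- A configuration after renaming the states along `e`. -/
def Config.relabel (e : Q ≃ Q') (k : Config Q) : Config Q' :=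
  ⟨e k.state, k.scanned, k.left, k.right⟩

/-- The machine `m` after renaming its states along `e`. -/
def Machine.relabel (e : Q ≃ Q') (m : Machine Q) : Machine Q' :=
  fun q x => (m (e.symm q) x).map fun i => (i.1, i.2.1, e i.2.2)

theorem step_relabel (e : Q ≃ Q') (m : Machine Q) (k : Config Q) :
    step (m.relabel e) (k.relabel e) = (step m k).map (Config.relabel e) := by
  simp only [step, Machine.relabel, Config.relabel, Equiv.symm_apply_apply, Option.map_map]
  congr 1
  ext1 ⟨w, d, q⟩
  cases d <;> rfl

theorem reaches_relabel (e : Q ≃ Q') {m : Machine Q} {k k' : Config Q}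
    (h : Reaches (step m) k k') : Reaches (step (m.relabel e)) (k.relabel e) (k'.relabel e) :=
  h.lift (Config.relabel e) fun k₁ k₂ hk => by
    change Config.relabel e k₂ ∈ step (m.relabel e) (k₁.relabel e)
    rw [step_relabel, Option.mem_def.mp hk]
    rfl

theorem Machine.relabel_eq_some (e : Q ≃ Q') {m : Machine Q} {q q' : Q} {x w : Bool} {d : Side}
    (h : m q x = some (w, d, q')) : m.relabel e (e q) x = some (w, d, e q') := by
  rw [Machine.relabel, e.symm_apply_apply, h, Option.map_some]

theorem Bounded.of_relabel (e : Q ≃ Q') {m : Machine Q} {q : Q}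
    (h : Bounded (m.relabel e) (e q)) : Bounded m q := by
  intro k hk
  refine (h _ (mem_eval_of_semiconj (step_relabel e m) hk)).imp id fun ⟨hle, hx, hm⟩ =>
    ⟨hle, hx, fun q' x hq' => ?_⟩
  have hnone : m.relabel e (e q') x = none := by
    rw [Machine.relabel, Equiv.symm_apply_apply, hq', Option.map_none]
  exact ⟨e.injective (hm _ _ hnone).1, (hm _ _ hnone).2⟩

/-- The reflection of a configuration at the head. -/
def Config.mirror (k : Config Q) : Config Q := ⟨k.state, k.scanned, k.right, k.left⟩

/-- The machine that mimics `m` on the reflected tape. -/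
noncomputable def Machine.mirror (m : Machine Q) : Machine Q :=
  fun q x => (m q x).map fun i => (i.1, Side.opp i.2.1, i.2.2)

theorem step_mirror (m : Machine Q) (k : Config Q) :
    step m.mirror k.mirror = (step m k).map Config.mirror := by
  simp only [step, Machine.mirror, Config.mirror, Option.map_map]
  congr 1
  ext1 ⟨w, d, q⟩
  cases d <;> rfl

theorem Bounded.of_mirror {m : Machine Q} {q : Q} (h : Bounded m.mirror q) : Bounded m q := by
  intro k hk
  have hones : k.mirror.ones = k.ones := add_comm _ _
  refine (h _ (mem_eval_of_semiconj (step_mirror m) hk)).imp (hones ▸ id)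
    fun ⟨hle, hx, hm⟩ => ⟨hones ▸ hle, hx, fun q' x hq' => hm q' x ?_⟩
  rw [Machine.mirror, hq', Option.map_none]

end Symmetries

section Stationary

variable {Q : Type} {f : Q × Bool → Option (Q × Bool × Dir)}

/-- The pair of state and scanned symbol that selects the next instruction. -/
def key (c : Cfg Q) : Q × Bool := (c.state, c.tape c.head)

/-- The effect of a stationary instruction on the pair that selected it. -/
def stay (f : Q × Bool → Option (Q × Bool × Dir)) (p : Q × Bool) : Option (Q × Bool) :=
  match f p with
  | some (q, x, .stay) => some (q, x)
  | _ => none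

/-- The move made by an instruction that is not stationary. -/
def moveOf : Q × Bool × Dir → Option (Bool × Side × Q)
  | (q, x, .left) => some (x, .left, q)
  | (_, _, .stay) => none
  | (q, x, .right) => some (x, .right, q)

open Classical in
/-- The machine that performs a whole run of stationary instructions of `f` together with the
move that ends it. -/
noncomputable def skipStays (f : Q × Bool → Option (Q × Bool × Dir)) : Machine Q :=
  fun q x => ((eval (stay f) (q, x)).toOption.bind f).bind moveOf

/-- The configuration `c` as seen from its head. -/
def view (c : Cfg Q) : Config Q :=
  ⟨c.state, c.tape c.head, fun n => c.tape (c.head - 1 - n), fun n => c.tape (c.head + 1 + n)⟩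

theorem skipStays_eq {q : Q} {x : Bool} {p : Q × Bool} (h : p ∈ eval (stay f) (q, x)) :
    skipStays f q x = (f p).bind moveOf := by
  classical rw [skipStays, Part.toOption_eq_some_iff.mpr h, Option.bind_some]

theorem skipStays_eq_of_stay_eq_none {p : Q × Bool} (h : stay f p = none) :
    skipStays f p.1 p.2 = (f p).bind moveOf :=
  skipStays_eq (mem_eval.mpr ⟨.refl, h⟩)

theorem skipStays_eq_of_stay_eq_some {p p' : Q × Bool} (h : stay f p = some p') :
    skipStays f p.1 p.2 = skipStays f p'.1 p'.2 := by
  rw [skipStays, skipStays, reaches_eval (.single h)]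

theorem view_stay (c : Cfg Q) (q : Q) (x : Bool) :
    view ⟨q, c.head + Dir.stay.move, Function.update c.tape c.head x⟩ =
      ⟨q, x, (view c).left, (view c).right⟩ := by
  have hhead : c.head + Dir.stay.move = c.head := add_zero _
  refine Config.ext rfl ?_ (funext fun n => ?_) (funext fun n => ?_) <;>
    simp only [view, hhead, Function.update_self]
  all_goals exact Function.update_of_ne (by omega) _ _

theorem view_left (c : Cfg Q) (q : Q) (x : Bool) :
    view ⟨q, c.head + Dir.left.move, Function.update c.tape c.head x⟩ =
      (view c).move x .left q := by
  have htape : ∀ i j : ℤ, i ≠ c.head → i = j → Function.update c.tape c.head x i = c.tape j :=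
    fun i j hi hij => hij ▸ Function.update_of_ne hi _ _
  refine Config.ext rfl ?_ (funext fun n => ?_) (funext fun n => ?_)
  · exact htape (c.head - 1) (c.head - 1 - (0 : ℕ)) (by omega) (by omega)
  · exact htape (c.head - 1 - 1 - n) (c.head - 1 - (n + 1 : ℕ)) (by omega) (by omega)
  · cases n with
    | zero =>
      have hi : c.head - 1 + 1 + ((0 : ℕ) : ℤ) = c.head := by omega
      exact (congrArg _ hi).trans (Function.update_self c.head x c.tape)
    | succ n =>
      exact htape (c.head - 1 + 1 + (n + 1 : ℕ)) (c.head + 1 + n) (by omega) (by omega)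

theorem view_right (c : Cfg Q) (q : Q) (x : Bool) :
    view ⟨q, c.head + Dir.right.move, Function.update c.tape c.head x⟩ =
      (view c).move x .right q := by
  have htape : ∀ i j : ℤ, i ≠ c.head → i = j → Function.update c.tape c.head x i = c.tape j :=
    fun i j hi hij => hij ▸ Function.update_of_ne hi _ _
  refine Config.ext rfl ?_ (funext fun n => ?_) (funext fun n => ?_)
  · exact htape (c.head + 1) (c.head + 1 + (0 : ℕ)) (by omega) (by omega)
  · cases n with
    | zero =>
      have hi : c.head + 1 - 1 - ((0 : ℕ) : ℤ) = c.head := by omega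
      exact (congrArg _ hi).trans (Function.update_self c.head x c.tape)
    | succ n =>
      exact htape (c.head + 1 - 1 - (n + 1 : ℕ)) (c.head - 1 - n) (by omega) (by omega)
  · exact htape (c.head + 1 + 1 + n) (c.head + 1 + (n + 1 : ℕ)) (by omega) (by omega)

theorem step_skipStays_of_stay_eq_some {p p' : Q × Bool} (h : stay f p = some p')
    (l r : Stream' Bool) :
    step (skipStays f) ⟨p.1, p.2, l, r⟩ = step (skipStays f) ⟨p'.1, p'.2, l, r⟩ := by
  simp only [step, skipStays_eq_of_stay_eq_some h]
  rfl

theorem step_skipStays_of_moveOf {c : Cfg Q} {i : Q × Bool × Dir} {j : Bool × Side × Q}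
    (hi : f (key c) = some i) (hj : moveOf i = some j) :
    step (skipStays f) (view c) = some ((view c).move j.1 j.2.1 j.2.2) := by
  have hstay : stay f (key c) = none := by
    obtain ⟨q, x, d⟩ := i
    cases d <;> simp_all [stay, moveOf]
  have hskip : skipStays f (key c).1 (key c).2 = some j :=
    (skipStays_eq_of_stay_eq_none hstay).trans (by rw [hi, Option.bind_some, hj])
  exact step_of_eq_some hskip

/-- The halting configuration `c` of `f` shows up as a halting configuration `k` of `skipStays f`,
up to the stationary instructions executed last. -/
def EndsAs (f : Q × Bool → Option (Q × Bool × Dir)) (c : Cfg Q) (k : Config Q) : Prop :=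
  k.left = (view c).left ∧ k.right = (view c).right ∧ key c ∈ eval (stay f) (k.state, k.scanned)

theorem exists_endsAs_of_stay {c c₁ : Cfg Q} {q : Q} {x : Bool}
    (hstay : stay f (key c₁) = some (q, x)) {k : Config Q} (hk : EndsAs f c k)
    (h : k ∈ eval (step (skipStays f)) ⟨q, x, (view c₁).left, (view c₁).right⟩) :
    ∃ k ∈ eval (step (skipStays f)) (view c₁), EndsAs f c k := by
  have hstep := step_skipStays_of_stay_eq_some hstay (view c₁).left (view c₁).right
  obtain ⟨hreach, hnone⟩ := mem_eval.mp h
  rcases hreach.cases_head with rfl | ⟨k', hk', hreach⟩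
  · refine ⟨view c₁, mem_eval.mpr ⟨.refl, hstep.trans hnone⟩, hk.1, hk.2.1, ?_⟩
    have hkey : eval (stay f) (key c₁) = eval (stay f) (q, x) := reaches_eval (.single hstay)
    exact hkey ▸ hk.2.2
  · exact ⟨k, mem_eval.mpr ⟨.head (hstep.trans hk') hreach, hnone⟩, hk⟩

theorem exists_mem_eval_skipStays {c₀ c : Cfg Q} (hc : c ∈ eval (stepTM f) c₀) :
    ∃ k ∈ eval (step (skipStays f)) (view c₀), EndsAs f c k := by
  refine evalInduction hc fun c₁ hc₁ ih => ?_
  rcases hf : f (key c₁) with _ | ⟨q, x, d⟩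
  · have hstay : stay f (key c₁) = none := by simp only [stay, hf]
    have hstep : step (skipStays f) (view c₁) = none :=
      step_eq_none.mpr ((skipStays_eq_of_stay_eq_none hstay).trans (by rw [hf]; rfl))
    obtain rfl : c = c₁ :=
      Part.mem_unique hc₁ (mem_eval.mpr ⟨.refl, congrArg (Option.map _) hf⟩)
    exact ⟨view c, mem_eval.mpr ⟨.refl, hstep⟩, rfl, rfl, mem_eval.mpr ⟨.refl, hstay⟩⟩
  obtain ⟨k, hk, hend⟩ := ih _ (congrArg (Option.map _) hf)
  cases d with
  | left =>
    have hstep := step_skipStays_of_moveOf hf (j := (x, .left, q)) rfl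
    exact ⟨k, reaches_eval (.single hstep) ▸ view_left c₁ q x ▸ hk, hend⟩
  | right =>
    have hstep := step_skipStays_of_moveOf hf (j := (x, .right, q)) rfl
    exact ⟨k, reaches_eval (.single hstep) ▸ view_right c₁ q x ▸ hk, hend⟩
  | stay =>
    have hstay : stay f (key c₁) = some (q, x) := by simp only [stay, hf]
    exact exists_endsAs_of_stay hstay hend (view_stay c₁ q x ▸ hk)

theorem encard_tape_le (c : Cfg Q) : {j | c.tape j = true}.encard ≤
    (view c).ones + {j | j = c.head ∧ c.tape j = true}.encard := by
  set l : Set ℕ := {n | (view c).left n = true}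
  set r : Set ℕ := {n | (view c).right n = true}
  have hsub : {j | c.tape j = true} ⊆
      ((fun n : ℕ => c.head - 1 - n) '' l ∪ (fun n : ℕ => c.head + 1 + n) '' r) ∪
        {j | j = c.head ∧ c.tape j = true} := by
    intro j hj
    rcases lt_trichotomy j c.head with hlt | heq | hgt
    · have hn : c.head - 1 - (c.head - 1 - j).toNat = j := by omega
      exact .inl (.inl ⟨_, show c.tape _ = true from hn.symm ▸ hj, hn⟩)
    · exact .inr ⟨heq, hj⟩
    · have hn : c.head + 1 + (j - c.head - 1).toNat = j := by omega
      exact .inl (.inr ⟨_, show c.tape _ = true from hn.symm ▸ hj, hn⟩)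
  calc {j | c.tape j = true}.encard
    _ ≤ _ := Set.encard_le_encard hsub
    _ ≤ _ := (Set.encard_union_le _ _).trans (add_le_add_left (Set.encard_union_le _ _) _)
    _ ≤ (view c).ones + {j | j = c.head ∧ c.tape j = true}.encard :=
      add_le_add_left (add_le_add (Set.encard_image_le _ _) (Set.encard_image_le _ _)) _

theorem WithinBound.encard_tape_le {c : Cfg Q} {k : Config Q} (hf : f (key c) = none)
    (hk : EndsAs f c k) (h : WithinBound (skipStays f) k) :
    {j | c.tape j = true}.encard ≤ 12 := by
  have hones : k.ones = (view c).ones := by rw [Config.ones, hk.1, hk.2.1]; rfl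
  refine (BusyBeaver.encard_tape_le c).trans (hones ▸ ?_)
  rcases h with hle | ⟨hle, hx, huniq⟩
  · have hhead : {j | j = c.head ∧ c.tape j = true}.encard ≤ 1 :=
      Set.encard_le_one_iff.mpr fun _ _ ha hb => ha.1.trans hb.1.symm
    exact add_le_add hle hhead
  · have hnone : skipStays f (key c).1 (key c).2 = none := by
      rw [skipStays_eq_of_stay_eq_none (by simp only [stay, hf]), hf, Option.bind_none]
    have hscan : c.tape c.head = false := (huniq _ _ hnone).2.trans hx
    have hempty : {j | j = c.head ∧ c.tape j = true} = ∅ :=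
      Set.eq_empty_of_forall_notMem fun j ⟨hj, ht⟩ => by
        rw [hj, hscan] at ht; cases ht
    rwa [hempty, Set.encard_empty, add_zero]

theorem mem_eval_of_stepsTM {c₀ c : Cfg Q} {t : ℕ} (h : stepsTM f t c₀ = some c)
    (hc : Halted f c) : c ∈ eval (stepTM f) c₀ := by
  refine mem_eval.mpr ⟨?_, congrArg (Option.map _) hc⟩
  induction t generalizing c₀ with
  | zero => exact Option.some.inj h ▸ .refl
  | succ t ih =>
    obtain ⟨c₁, hstep, hsteps⟩ := Option.bind_eq_some_iff.mp h
    exact .head hstep (ih hsteps)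

end Stationary

theorem count_true_le_encard {tape : ℤ → Bool} {w : List Bool} {i : ℤ}
    (h : ∀ k : ℕ, k < w.length → w.getD k false = tape (i + k)) :
    (w.count true : ℕ∞) ≤ {j | i ≤ j ∧ tape j = true}.encard := by
  induction w generalizing i with
  | nil => exact zero_le
  | cons x w ih =>
    have hx : x = tape i := by simpa using h 0 (Nat.succ_pos _)
    have hw : (w.count true : ℕ∞) ≤ {j | i + 1 ≤ j ∧ tape j = true}.encard := by
      refine ih fun k hk => ?_
      simpa [add_comm, add_left_comm] using h (k + 1) (Nat.succ_lt_succ hk)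
    cases x with
    | false =>
      rw [List.count_cons_of_ne (by decide)]
      exact hw.trans (Set.encard_le_encard fun j hj => ⟨by grind, hj.2⟩)
    | true =>
      rw [List.count_cons_self, Nat.cast_succ]
      refine (add_le_add_left hw 1).trans ?_
      rw [← Set.encard_insert_of_notMem (a := i) (by simp)]
      exact Set.encard_le_encard (Set.insert_subset ⟨le_rfl, hx.symm⟩
        fun j hj => ⟨by grind, hj.2⟩)

theorem count_true_le_twelve_of_computes {Q : Type} {f : Q × Bool → Option (Q × Bool × Dir)}
    {q : Q} (hf : Bounded (skipStays f) q) {w : List Bool} {t : ℕ} (h : Computes f q w t) :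
    w.count true ≤ 12 := by
  obtain ⟨c, hsteps, hhalt, i, hw, -⟩ := h
  obtain ⟨k, hk, hend⟩ := exists_mem_eval_skipStays (mem_eval_of_stepsTM hsteps hhalt)
  have hk' : WithinBound (skipStays f) k := hf k hk
  have hle := (count_true_le_encard hw).trans (Set.encard_le_encard fun j hj => hj.2)
  exact_mod_cast hle.trans (hk'.encard_tape_le hhalt hend)

section Tables

/-- The states of the machines explored by the search; every machine is started in state `a`. -/
inductive State
  | a | b | c | d
  deriving DecidableEq

/-- An entry of a partially known transition table. `undefined` leaves the instruction open;
`probe i` acts as `i`, but a simulation executing it first tests whether it is in a loop. -/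
inductive Instr
  | undefined
  | move (w : Bool) (d : Side) (s : State)
  | probe (i : Instr)

/-- The two instructions of a state, for the symbols `0` and `1`. -/
structure Row where
  (zero one : Instr)

/-- A partially known transition table. -/
structure Table where
  (a b c d : Row)

-- What the search computes with is written with recursors: the kernel reduces these directly, and
-- takes about twice as long over definitions compiled from pattern matching.

/-- The instruction of a row for the symbol `x`. -/
noncomputable def Row.get (r : Row) (x : Bool) : Instr :=
  Row.rec (fun i₀ i₁ => Bool.rec i₀ i₁ x) r

/-- The instruction of `T` for the state `s` and the symbol `x`. -/
noncomputable def Table.get (T : Table) (s : State) (x : Bool) : Instr :=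
  Row.get (State.rec T.a T.b T.c T.d s) x

/-- The row `r` with its instruction for `x` replaced by `i`. -/
noncomputable def Row.set (r : Row) (x : Bool) (i : Instr) : Row :=
  Row.rec (fun i₀ i₁ => Bool.rec ⟨i, i₁⟩ ⟨i₀, i⟩ x) r

/-- The table `T` with its instruction for `s` and `x` replaced by `i`. -/
noncomputable def Table.set (T : Table) (s : State) (x : Bool) (i : Instr) : Table :=
  Table.rec (fun a b c d => State.rec ⟨a.set x i, b, c, d⟩ ⟨a, b.set x i, c, d⟩
    ⟨a, b, c.set x i, d⟩ ⟨a, b, c, d.set x i⟩ s) T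

/-- The instruction `o` of a machine is compatible with a table entry. Probes are admitted only if
`probed` holds. -/
def Instr.Agrees (probed : Prop) : Instr → Option (Bool × Side × State) → Prop
  | .undefined, _ => True
  | .move w d s, o => o = some (w, d, s)
  | .probe i, o => probed ∧ i.Agrees probed o

/-- `m` extends the partial table `T`, which has probes only at the pairs satisfying `P`. -/
def Table.Agrees (T : Table) (m : Machine State) (P : State → Bool → Prop) : Prop :=
  ∀ s x, (T.get s x).Agrees (P s x) (m s x)

theorem Table.get_set (T : Table) (s s' : State) (x x' : Bool) (i : Instr) :
    (T.set s x i).get s' x' = if s' = s ∧ x' = x then i else T.get s' x' := by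
  obtain ⟨⟨_, _⟩, ⟨_, _⟩, ⟨_, _⟩, ⟨_, _⟩⟩ := T
  cases s <;> cases s' <;> cases x <;> cases x' <;> rfl

theorem Instr.Agrees.mono {p q : Prop} (hpq : p → q) {i : Instr} {o : Option (Bool × Side × State)}
    (h : i.Agrees p o) : i.Agrees q o := by
  induction i with
  | undefined => trivial
  | move => exact h
  | probe i ih => exact ⟨hpq h.1, ih h.2⟩

theorem Table.Agrees.set {T : Table} {m : Machine State} {P P' : State → Bool → Prop}
    (h : T.Agrees m P) (hP : ∀ s x, P s x → P' s x) {s : State} {x : Bool} {i : Instr}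
    (hi : i.Agrees (P' s x) (m s x)) : (T.set s x i).Agrees m P' := by
  intro s' x'
  rw [Table.get_set]
  split_ifs with heq
  · exact heq.1 ▸ heq.2 ▸ hi
  · exact (h s' x').mono (hP s' x')

end Tables

section HalfTapes

/-- A half-tape together with its history since a mark was set. In `cell x₁ (… (mark used rest))`
the half-tape carries `x₁, …`, then `rest`, then zeros; the cells `used` (most recent first) have
been removed from it since the mark. -/
inductive Half
  | cell (x : Bool) (H : Half)
  | mark (used rest : List Bool)

/-- How a simulation ends: in a proven loop, at an undefined instruction, or out of fuel. -/
inductive Outcome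
  | loop
  | undefined (s : State) (x : Bool) (L R : Half)
  | timeout (s : State) (x : Bool) (L R : Half)

/-- What becomes of a configuration. -/
abbrev Run := State → Bool → Half → Half → Outcome

/-- Passes to `k` the first cell beyond the mark and what is then left; the blank part of the tape
is entered when `rest` is used up. -/
noncomputable def popMarked (used rest : List Bool) (k : Bool → Half → Outcome) : Outcome :=
  List.rec (k false (.mark (.cons false used) .nil))
    (fun x xs _ => k x (.mark (.cons x used) xs)) rest

/-- Passes to `k` the first cell of `H` and the half-tape behind it. -/
noncomputable def Half.pop (H : Half) (k : Bool → Half → Outcome) : Outcome :=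
  Half.rec (fun x H _ => k x H) (fun used rest => popMarked used rest k) H

/-- The contents of a half-tape, up to trailing zeros. -/
noncomputable def Half.toList (H : Half) : List Bool :=
  Half.rec (fun x _ ih => .cons x ih) (fun _ rest => rest) H

/-- Conjunction, evaluating `y` only if `x` holds. -/
noncomputable def band (x y : Bool) : Bool := Bool.rec false y x

/-- Equality of booleans. -/
noncomputable def beq (x y : Bool) : Bool := Bool.rec (Bool.rec true false y) y x

/-- All cells in `xs` carry `0`. -/
noncomputable def isBlank (xs : List Bool) : Bool :=
  List.rec true (fun x _ ih => Bool.rec ih false x) xs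

/-- A test that `H` begins with `xs`. The list may extend past the mark only if nothing but blank
tape lies there, and its part past the mark must then be blank. -/
noncomputable def Half.covers (xs : List Bool) : Half → Bool :=
  List.rec (fun _ => true) (fun x xs ih H => Half.rec (fun y H _ => band (beq x y) (ih H))
    (fun _ rest => List.rec (isBlank (.cons x xs)) (fun _ _ _ => false) rest) H) xs

/-- The reversal of `xs`, followed by a second list. -/
noncomputable def reverseOnto (xs : List Bool) : List Bool → List Bool :=
  List.rec (fun ys => ys) (fun x _ ih ys => ih (.cons x ys)) xs

/-- A test that `H` begins with the cells removed since the mark: then `H` is what it was at the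
mark, with a different unvisited part. -/
noncomputable def Half.returned (H : Half) : Bool :=
  Half.rec (fun _ _ ih => ih) (fun used _ H => Half.covers (reverseOnto used .nil) H) H H

namespace Half

/-- The cells that have been removed since the mark, the most recent one first. -/
def used : Half → List Bool
  | cell _ H => H.used
  | mark used _ => used

/-- The part of the half-tape that has not been visited since the mark. -/
def rest : Half → Stream' Bool
  | cell _ H => H.rest
  | mark _ rest => rest ++ₛ .const false

/-- The half-tape after replacing its unvisited part by `X`. -/
def fill (X : Stream' Bool) : Half → Stream' Bool
  | cell x H => x :: H.fill X
  | mark _ _ => X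

/-- The half-tape when the mark was set, had its unvisited part been `X`. -/
def unread (X : Stream' Bool) (H : Half) : Stream' Bool := H.used.reverse ++ₛ X

/-- The infinite sequence of cells of a half-tape. -/
noncomputable def stream (H : Half) : Stream' Bool := H.toList ++ₛ .const false

theorem stream_eq_fill (H : Half) : H.stream = H.fill H.rest := by
  induction H with
  | cell x H ih => exact congrArg (Stream'.cons x) ih
  | mark used rest => rfl

theorem pop_eq (H : Half) : ∃ x H', (∀ k, H.pop k = k x H') ∧ H.stream = x :: H'.stream ∧
    ∀ X, ∃ X₀, H'.unread X = H.unread X₀ ∧ H.fill X₀ = x :: H'.fill X := by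
  have hunread (x : Bool) (used l l' : List Bool) (X : Stream' Bool) :
      (mark (x :: used) l).unread X = (mark used l').unread (x :: X) := by
    simp only [unread, Half.used, List.reverse_cons, Stream'.append_append_stream]
    rfl
  rcases H with ⟨x, H⟩ | ⟨used, _ | ⟨x, xs⟩⟩
  · exact ⟨x, H, fun _ => rfl, rfl, fun X => ⟨X, rfl, rfl⟩⟩
  · exact ⟨false, _, fun _ => rfl, Stream'.const_eq false, fun X => ⟨_, hunread .., rfl⟩⟩
  · exact ⟨x, _, fun _ => rfl, rfl, fun X => ⟨_, hunread .., rfl⟩⟩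

end Half

theorem band_eq_true {x y : Bool} : band x y = true ↔ x = true ∧ y = true := by
  cases x <;> cases y <;> decide

theorem beq_eq_true {x y : Bool} : beq x y = true ↔ x = y := by
  cases x <;> cases y <;> decide

theorem append_const_of_isBlank {xs : List Bool} (h : isBlank xs = true) :
    xs ++ₛ .const false = .const false := by
  induction xs with
  | nil => rfl
  | cons x xs ih =>
    cases x with
    | false => exact (congrArg (Stream'.cons false) (ih h)).trans (Stream'.const_eq false).symm
    | true => cases h

theorem reverseOnto_eq (xs ys : List Bool) : reverseOnto xs ys = xs.reverse ++ ys := by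
  induction xs generalizing ys with
  | nil => rfl
  | cons x xs ih => exact (ih (x :: ys)).trans (by simp)

theorem Half.exists_of_covers {xs : List Bool} {H : Half} (h : H.covers xs = true) :
    ∃ P : Stream' Bool → Prop, P H.rest ∧ ∀ X, P X → ∃ X', P X' ∧ H.fill X = xs ++ₛ X' := by
  induction xs generalizing H with
  | nil => exact ⟨fun _ => True, trivial, fun X _ => ⟨H.fill X, trivial, rfl⟩⟩
  | cons x xs ih =>
    rcases H with ⟨y, H⟩ | ⟨used, _ | ⟨y, ys⟩⟩
    · obtain ⟨hxy, hH⟩ := band_eq_true.mp h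
      obtain rfl := beq_eq_true.mp hxy
      obtain ⟨P, hP, hstep⟩ := ih hH
      exact ⟨P, hP, fun X hX => (hstep X hX).imp fun X' hX' =>
        ⟨hX'.1, congrArg (Stream'.cons x) hX'.2⟩⟩
    · refine ⟨fun X => X = .const false, rfl, fun X hX => ⟨_, rfl, ?_⟩⟩
      exact hX.trans (append_const_of_isBlank (show isBlank (x :: xs) = true from h)).symm
    · cases h

theorem Half.exists_of_returned {H : Half} (h : H.returned = true) :
    ∃ P : Stream' Bool → Prop, P H.rest ∧ ∀ X, P X → ∃ X', P X' ∧ H.fill X = H.unread X' := by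
  have hret (H' : Half) : Half.rec (fun _ _ ih => ih)
      (fun used _ H => Half.covers (reverseOnto used .nil) H) H' H = H.covers H'.used.reverse := by
    induction H' with
    | cell _ _ ih => exact ih
    | mark used rest =>
      exact congrArg (Half.covers · H) ((reverseOnto_eq used []).trans (List.append_nil _))
  exact exists_of_covers ((hret H).symm.trans h)

end HalfTapes

section Simulation

/-- Writes `w` between `L` and `R`, moves the head to the side `d` and goes on with `k`. -/
noncomputable def stepTo (L R : Half) (k : Run) (w : Bool) (d : Side) (s : State) : Outcome :=
  Turing.Dir.rec (L.pop fun x L' => k s x L' (.cell w R)) (R.pop fun x R' => k s x (.cell w L) R') d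

/-- Reports a loop if both half-tapes have returned, and otherwise goes on with `resume`. -/
noncomputable def probe (L R : Half) (_ : Instr) (resume : Outcome) : Outcome :=
  Bool.rec resume .loop (band L.returned R.returned)

/-- Executes the instruction `i` and goes on with `k`; the outcome at an undefined instruction is
`stuck`. -/
noncomputable def execute (stuck : Outcome) (L R : Half) (k : Run) (i : Instr) : Outcome :=
  Instr.rec stuck (stepTo L R k) (probe L R) i

/-- Simulates `n` steps of the table `T`. -/
noncomputable def Table.run (n : ℕ) (T : Table) : Run :=
  Table.rec (fun a b c d => Nat.rec .timeout (fun _ ih s x L R =>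
    execute (.undefined s x L R) L R ih (Row.get (State.rec a b c d s) x)) n) T

/-- Simulates `n` steps after executing the instruction `i` of the current pair. The mark is set at
the current configuration, and the probe on its pair tests whether it recurs. -/
noncomputable def phaseAt (T : Table) (n : ℕ) (s : State) (x : Bool) (L R : Half) (i : Instr) :
    Outcome :=
  execute (.undefined s x L R) (.mark .nil L.toList) (.mark .nil R.toList)
    ((T.set s x (.probe i)).run n) i

/-- Simulates `T` from the given configuration, with the mark set there. -/
noncomputable def phase (T : Table) (n : ℕ) (s : State) (x : Bool) (L R : Half) : Outcome :=
  phaseAt T n s x L R (T.get s x)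

/-- What an outcome says about a machine that extends the simulated table. -/
def Outcome.Sound (m : Machine State) : Outcome → Prop
  | .loop => Diverges m (start .a)
  | .undefined s x L R | .timeout s x L R =>
      Reaches (step m) (start .a) ⟨s, x, L.stream, R.stream⟩

variable {m : Machine State} {s₀ s : State} {x₀ x : Bool} {L R : Half}

/-- The simulation has arrived at `⟨s, x, L, R⟩`, having set its mark in state `s₀` on symbol `x₀`.
The transitions `r` made since then are valid whatever the unvisited cells contain. -/
structure Tracks (r : Config State → Config State → Prop) (m : Machine State) (s₀ : State)
    (x₀ : Bool) (s : State) (x : Bool) (L R : Half) : Prop where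
  reaches : Reaches (step m) (start .a) ⟨s, x, L.stream, R.stream⟩
  transport : ∀ X Y, r ⟨s₀, x₀, L.unread X, R.unread Y⟩ ⟨s, x, L.fill X, R.fill Y⟩

theorem Tracks.exists_stepTo (h : Tracks (Reaches (step m)) m s₀ x₀ s x L R) {w : Bool} {d : Side}
    {t : State} (hm : m s x = some (w, d, t)) : ∃ x' L' R',
      (∀ k, stepTo L R k w d t = k t x' L' R') ∧
      Tracks (Reaches₁ (step m)) m s₀ x₀ t x' L' R' := by
  have hstep (l r : Stream' Bool) :
      step m ⟨s, x, l, r⟩ = some (Config.move ⟨s, x, l, r⟩ w d t) := step_of_eq_some hm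
  cases d with
  | left =>
    obtain ⟨x', L', hpop, hstream, hX⟩ := L.pop_eq
    refine ⟨x', L', .cell w R, fun k => hpop _, h.reaches.tail ?_, fun X Y => ?_⟩
    · rw [hstream, hstep]
      rfl
    · obtain ⟨X₀, hunread, hfill⟩ := hX X
      rw [hunread]
      refine TransGen.tail' (h.transport X₀ Y) ?_
      rw [hfill, hstep]
      rfl
  | right =>
    obtain ⟨x', R', hpop, hstream, hX⟩ := R.pop_eq
    refine ⟨x', .cell w L, R', fun k => hpop _, h.reaches.tail ?_, fun X Y => ?_⟩
    · rw [hstream, hstep]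
      rfl
    · obtain ⟨Y₀, hunread, hfill⟩ := hX Y
      rw [hunread]
      refine TransGen.tail' (h.transport X Y₀) ?_
      rw [hfill, hstep]
      rfl

/-- The marked configuration recurs with other unvisited cells, of which the same can be said. -/
theorem Tracks.diverges (h : Tracks (Reaches₁ (step m)) m s x s x L R)
    (hL : L.returned = true) (hR : R.returned = true) : Diverges m (start .a) := by
  obtain ⟨P, hP, hPstep⟩ := L.exists_of_returned hL
  obtain ⟨P', hP', hPstep'⟩ := R.exists_of_returned hR
  have hloop : ¬ (eval (step m) ⟨s, x, L.stream, R.stream⟩).Dom := by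
    refine not_dom_eval_of_reaches₁_closed
      (S := {k | ∃ X Y, P X ∧ P' Y ∧ k = ⟨s, x, L.fill X, R.fill Y⟩}) ?_
      ⟨_, _, hP, hP', by rw [L.stream_eq_fill, R.stream_eq_fill]⟩
    rintro _ ⟨X, Y, hX, hY, rfl⟩
    obtain ⟨X', hX', hXX'⟩ := hPstep X hX
    obtain ⟨Y', hY', hYY'⟩ := hPstep' Y hY
    exact ⟨_, ⟨X', Y', hX', hY', rfl⟩, hXX' ▸ hYY' ▸ h.transport X' Y'⟩
  rwa [Diverges, reaches_eval h.reaches]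

theorem Tracks.execute_sound {stuck : Outcome} (hstuck : stuck.Sound m)
    (h : Tracks (Reaches (step m)) m s₀ x₀ s x L R) {probed : Prop}
    (hprobe : probed → L.returned = true → R.returned = true → Diverges m (start .a))
    {k : Run} (hk : ∀ s x L R, Tracks (Reaches₁ (step m)) m s₀ x₀ s x L R → (k s x L R).Sound m)
    {i : Instr} (hi : i.Agrees probed (m s x)) : (execute stuck L R k i).Sound m := by
  induction i with
  | undefined => exact hstuck
  | move w d t =>
    obtain ⟨x', L', R', hstep, h'⟩ := h.exists_stepTo hi
    exact (congrArg (Outcome.Sound m) (hstep k)).mpr (hk t x' L' R' h')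
  | probe i ih =>
    change Outcome.Sound m (Bool.rec _ _ (band L.returned R.returned))
    cases hret : band L.returned R.returned with
    | false => exact ih hi.2
    | true => exact hprobe hi.1 (band_eq_true.mp hret).1 (band_eq_true.mp hret).2

theorem Table.run_succ (T : Table) (n : ℕ) (s : State) (x : Bool) (L R : Half) :
    T.run (n + 1) s x L R = execute (.undefined s x L R) L R (T.run n) (T.get s x) := by
  cases T
  rfl

theorem Tracks.run_sound {T : Table} (hT : T.Agrees m fun s x => s = s₀ ∧ x = x₀) (n : ℕ)
    (h : Tracks (Reaches₁ (step m)) m s₀ x₀ s x L R) : (T.run n s x L R).Sound m := by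
  induction n generalizing s x L R with
  | zero => cases T; exact h.reaches
  | succ n ih =>
    rw [Table.run_succ]
    exact Tracks.execute_sound (stuck := .undefined s x L R) h.reaches
      ⟨h.reaches, fun X Y => (h.transport X Y).to_reflTransGen⟩
      (fun ⟨hs, hx⟩ => by subst hs hx; exact h.diverges) (fun _ _ _ _ => ih) (hT s x)

theorem phase_sound {T : Table} (hT : T.Agrees m fun _ _ => False) (n : ℕ)
    (h : Reaches (step m) (start .a) ⟨s, x, L.stream, R.stream⟩) :
    (phase T n s x L R).Sound m := by
  have htrack : Tracks (Reaches (step m)) m s x s x (.mark [] L.toList) (.mark [] R.toList) :=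
    ⟨h, fun _ _ => .refl⟩
  refine htrack.execute_sound (stuck := .undefined s x L R) h False.elim (fun t y L' R' h' => ?_)
    (hT s x)
  have hi : (Instr.probe (T.get s x)).Agrees (s = s ∧ x = x) (m s x) :=
    ⟨⟨rfl, rfl⟩, (hT s x).mono False.elim⟩
  exact h'.run_sound (hT.set (fun _ _ => False.elim) hi) n

end Simulation

section Saturation

/-- The symbol carried by a cell whose code is `n`. -/
noncomputable def odd (n : ℕ) : Bool := Nat.beq (Nat.mod n 2) 1

/-- Local facts about the reachable configurations, in terms of numerical codes for cells and
half-tapes. `edge σ w c u`: on the side `σ`, a half-tape with code `w` may consist of a cell with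
code `c` and a half-tape with code `u` behind it. `wait σ w s v`: the machine may be in state `s`
while the scanned cell together with the half-tape on the side `σ` has code `w`, and the other
half-tape has code `v`. -/
inductive Item
  | edge (σ : Side) (w c u : ℕ)
  | wait (σ : Side) (w : ℕ) (s : State) (v : ℕ)

/-- The cells of the half-tape `X` on the side `σ` can be read off one by one along edges in `S`,
starting from the code `w`. -/
def Stack (S : Set Item) (σ : Side) (w : ℕ) (X : Stream' Bool) : Prop :=
  ∃ ws cs : Stream' ℕ, ws.head = w ∧ ∀ n, .edge σ (ws n) (cs n) (ws (n + 1)) ∈ S ∧ odd (cs n) = X n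

/-- The half-tape of `k` on a given side. -/
def Config.side {Q : Type*} (k : Config Q) : Side → Stream' Bool
  | .left => k.left
  | .right => k.right

/-- The items in `S` admit the configuration `k`. -/
def Describes (S : Set Item) (k : Config State) : Prop :=
  ∃ σ w v, .wait σ w k.state v ∈ S ∧ Stack S σ w (k.scanned :: k.side σ) ∧
    Stack S (Side.opp σ) v (k.side (Side.opp σ))

/-- `S` contains what becomes of the configurations waiting on the side `σ` in the state `s`,
scanning the cell `c` with `u` behind it, and with `v` on the other side. -/
def Joined (T : Table) (S : Set Item) (σ : Side) (c u : ℕ) (s : State) (v : ℕ) : Prop :=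
  ∃ c' w' d t, T.get s (odd c) = .move (odd c') d t ∧
    .wait d (if d = σ then u else v) t w' ∈ S ∧
    .edge (Side.opp d) w' c' (if Side.opp d = σ then u else v) ∈ S

section Stack

variable {S : Set Item} {σ : Side} {w u c : ℕ} {X : Stream' Bool}

theorem Stack.cons (h : .edge σ w c u ∈ S) (hX : Stack S σ u X) : Stack S σ w (odd c :: X) := by
  obtain ⟨ws, cs, rfl, hwc⟩ := hX
  refine ⟨w :: ws, c :: cs, rfl, fun n => ?_⟩
  cases n with
  | zero => exact ⟨h, rfl⟩
  | succ n => exact hwc n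

theorem Stack.exists_edge (h : Stack S σ w X) :
    ∃ c u, .edge σ w c u ∈ S ∧ odd c = X.head ∧ Stack S σ u X.tail := by
  obtain ⟨ws, cs, rfl, hwc⟩ := h
  exact ⟨cs 0, ws 1, (hwc 0).1, (hwc 0).2, ws.tail, cs.tail, rfl, fun n => hwc (n + 1)⟩

theorem stack_const (h : .edge σ 0 0 0 ∈ S) : Stack S σ 0 (.const false) :=
  ⟨.const 0, .const 0, rfl, fun _ => ⟨h, rfl⟩⟩

end Stack

theorem Config.move_eq {Q : Type*} (k : Config Q) (w : Bool) (d : Side) (q : Q) :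
    (k.move w d q).state = q ∧ (k.move w d q).scanned :: (k.move w d q).side d = k.side d ∧
      (k.move w d q).side (Side.opp d) = w :: k.side (Side.opp d) := by
  cases d <;> exact ⟨rfl, Stream'.eta _, rfl⟩

theorem diverges_of_joined {T : Table} {m : Machine State} (hT : T.Agrees m fun _ _ => False)
    {S : Set Item} {k : Config State} (hk : Describes S k)
    (hS : ∀ σ w c u s v, .edge σ w c u ∈ S → .wait σ w s v ∈ S → Joined T S σ c u s v) :
    Diverges m k := by
  refine not_dom_eval_of_reaches₁_closed (S := {k | Describes S k}) ?_ hk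
  rintro k ⟨σ, w, v, hwait, hσ, hopp⟩
  obtain ⟨c, u, hedge, hc, hu⟩ := hσ.exists_edge
  have hc : odd c = k.scanned := hc
  obtain ⟨c', w', d, t, hget, hwait', hedge'⟩ := hS _ _ _ _ _ _ hedge hwait
  have hm : m k.state k.scanned = some (odd c', d, t) := by
    have hagree := hT k.state (odd c)
    rwa [hget, hc] at hagree
  have hside (ρ : Side) : Stack S ρ (if ρ = σ then u else v) (k.side ρ) := by
    by_cases hρ : ρ = σ
    · subst hρ
      rwa [if_pos rfl]
    · obtain rfl : ρ = Side.opp σ := by cases ρ <;> cases σ <;> first | rfl | contradiction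
      rwa [if_neg hρ]
  obtain ⟨hstate, hnear, hfar⟩ := k.move_eq (odd c') d t
  exact ⟨_, ⟨d, _, w', hstate ▸ hwait', hnear ▸ hside d, hfar ▸ .cons hedge' (hside _)⟩,
    .single (step_of_eq_some hm)⟩

/-- The parameters of an assignment of codes. Whether saturation succeeds depends on them, its
soundness does not. -/
structure Coding where
  (base shift modulus : ℕ)

/-- The code of a cell with code `c` after `x` is written on it in state `s`. Its parity is the
symbol `x`, and the other digits record the most recent states and symbols with which the cell was
scanned, as many of them as `base` leaves room for. -/
noncomputable def Coding.cell (C : Coding) (s : State) (c : ℕ) (x : Bool) : ℕ :=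
  Nat.add (Bool.rec 0 1 x) (Nat.mul 2 (Nat.mod
    (Nat.add (Nat.mul 8 c) (Nat.add (State.rec 0 2 4 6 s) (Nat.mod c 2))) C.base))

/-- The code of a half-tape with first cell `c` and a half-tape of code `w` behind it; `modulus`
determines how many cells matter. -/
noncomputable def Coding.push (C : Coding) (c w : ℕ) : ℕ :=
  Nat.mod (Nat.add c (Nat.mul C.shift w)) C.modulus

theorem Coding.odd_cell (C : Coding) (s : State) (c : ℕ) (x : Bool) : odd (C.cell s c x) = x := by
  have hodd (b n : ℕ) : odd (b + 2 * n) = odd b :=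
    congrArg (Nat.beq · 1) (Nat.add_mul_mod_self_left b 2 n)
  cases x <;> exact hodd _ _

/-- Equality of states. -/
noncomputable def State.beq (s t : State) : Bool :=
  State.rec (State.rec true false false false t) (State.rec false true false false t)
    (State.rec false false true false t) (State.rec false false false true t) s

/-- The edges and waits recorded for one code on one side, as pairs of their remaining data. -/
structure Entry where
  (edges : List (ℕ × ℕ))
  (waits : List (State × ℕ))

/-- The items recorded for one side, by code. -/
abbrev Index := ℕ → Entry

/-- The index `I` with the entry for `w` replaced by `e`. -/
noncomputable def Index.set (I : Index) (w : ℕ) (e : Entry) : Index :=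
  fun v => Bool.rec (I v) e (Nat.beq w v)

/-- A membership test for edges. -/
noncomputable def memEdge (c u : ℕ) (es : List (ℕ × ℕ)) : Bool :=
  List.rec false (fun e _ ih => Bool.rec ih (Bool.rec ih true (Nat.beq e.2 u)) (Nat.beq e.1 c)) es

/-- A membership test for waits. -/
noncomputable def memWait (s : State) (v : ℕ) (ws : List (State × ℕ)) : Bool :=
  List.rec false (fun e _ ih => Bool.rec ih (Bool.rec ih true (State.beq s e.1)) (Nat.beq e.2 v)) ws

/-- Passes to `k` the queue `l` extended by the two items for a move to the side `d` into state `s`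
that leaves behind a cell with code `c`; the half-tape `near` lies ahead, and `far` behind that
cell. -/
noncomputable def enqueue (C : Coding) (d : Side) (s : State) (near far c : ℕ)
    (k : List Item → Bool) (l : List Item) : Bool :=
  k (.cons (.wait d near s (C.push c far)) (.cons (.edge (Side.opp d) (C.push c far) c far) l))

/-- Passes to `k` the queue `l` extended by the effect of the instruction `i` in state `s` on a
scanned cell with code `c`, where the half-tapes have the codes `u` on the left and `v` on the
right. The saturation fails at an undefined instruction. -/
noncomputable def derive (C : Coding) (s : State) (c u v : ℕ) (k : List Item → Bool)
    (l : List Item) (i : Instr) : Bool :=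
  Instr.rec false (fun x d t => Turing.Dir.rec (enqueue C .left t u v (C.cell s c x) k l)
    (enqueue C .right t v u (C.cell s c x) k l) d) (fun _ _ => false) i

/-- Combines an edge with a wait for the same code: the head scans the cell `c`, beyond which lies
`u`. -/
noncomputable def join (C : Coding) (T : Table) (σ : Side) (c u : ℕ) (k : List Item → Bool)
    (s : State) (v : ℕ) (l : List Item) : Bool :=
  Turing.Dir.rec (derive C s c u v k l) (derive C s c v u k l) σ (T.get s (odd c))

/-- Combines an edge with all waits in `ws`. -/
noncomputable def joinEdge (C : Coding) (T : Table) (σ : Side) (c u : ℕ) (ws : List (State × ℕ))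
    (k : List Item → Bool) : List Item → Bool :=
  List.rec k (fun x _ ih => Prod.rec (join C T σ c u ih) x) ws

/-- Combines a wait with all edges in `es`. -/
noncomputable def joinWait (C : Coding) (T : Table) (σ : Side) (s : State) (v : ℕ)
    (es : List (ℕ × ℕ)) (k : List Item → Bool) : List Item → Bool :=
  List.rec k (fun x _ ih => Prod.rec (fun c u => join C T σ c u ih s v) x) es

/-- A procedure on the recorded items of the two sides and the queue of items not yet recorded. -/
abbrev Saturation := Index → Index → List Item → Bool

/-- Records the entry `e` for the code `w` on the side `σ`. -/
noncomputable def putEntry (σ : Side) (w : ℕ) (L R : Index) (k : Saturation) (e : Entry)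
    (l : List Item) : Bool :=
  Turing.Dir.rec (k (L.set w e) R l) (k L (R.set w e) l) σ

/-- Records an edge unless it is already there, and enqueues what it yields with the waits `ws`. -/
noncomputable def addEdge (C : Coding) (T : Table) (σ : Side) (w c u : ℕ) (L R : Index)
    (k : Saturation) (l : List Item) (es : List (ℕ × ℕ)) (ws : List (State × ℕ)) : Bool :=
  Bool.rec (joinEdge C T σ c u ws (putEntry σ w L R k ⟨.cons (c, u) es, ws⟩) l)
    (k L R l) (memEdge c u es)

/-- Records a wait unless it is already there, and enqueues what it yields with the edges `es`. -/
noncomputable def addWait (C : Coding) (T : Table) (σ : Side) (w : ℕ) (s : State) (v : ℕ)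
    (L R : Index) (k : Saturation) (l : List Item) (es : List (ℕ × ℕ)) (ws : List (State × ℕ)) :
    Bool :=
  Bool.rec (joinWait C T σ s v es (putEntry σ w L R k ⟨es, .cons (s, v) ws⟩) l)
    (k L R l) (memWait s v ws)

/-- Records an item, and enqueues what it yields with those recorded earlier. -/
noncomputable def addItem (C : Coding) (T : Table) (L R : Index) (k : Saturation) (l : List Item)
    (f : Item) : Bool :=
  Item.rec
    (fun σ w c u => Entry.rec (addEdge C T σ w c u L R k l) (Turing.Dir.rec L R σ w))
    (fun σ w s v => Entry.rec (addWait C T σ w s v L R k l) (Turing.Dir.rec L R σ w)) f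

/-- Processes the queue until it is empty, giving up after `n` items. -/
noncomputable def saturate (C : Coding) (T : Table) (n : ℕ) : Saturation :=
  Nat.rec (fun _ _ _ => false)
    (fun _ ih L R l => List.rec true (fun f l _ => addItem C T L R ih l f) l) n

/-- The saturation starting from the blank tape succeeds. Blank cells and half-tapes have the code
`0`. -/
noncomputable def saturates (T : Table) (C : Coding) : Bool :=
  saturate C T 1280 (fun _ => ⟨.nil, .nil⟩) (fun _ => ⟨.nil, .nil⟩)
    (.cons (.edge .left 0 0 0) (.cons (.edge .right 0 0 0) (.cons (.wait .right 0 .a 0) .nil)))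

/-- The codings to be tried, found by experiment to be sufficient for the search below. -/
noncomputable def codings : List Coding :=
  [⟨8, 16, 16⟩, ⟨128, 256, 256⟩, ⟨32768, 65536, 4294967296⟩,
    ⟨2147483648, 4294967296, 18446744073709551616⟩, ⟨1, 3, 12⟩, ⟨2, 4, 16384⟩]

/-- A test that no machine extending `T` halts. -/
noncomputable def Table.nonhalting (T : Table) : Bool :=
  List.rec false (fun C _ ih => Bool.rec ih true (saturates T C)) codings

/-- The entry for the code `w` on the side `σ`. -/
noncomputable abbrev entry (L R : Index) (σ : Side) (w : ℕ) : Entry := Turing.Dir.rec L R σ w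

/-- The items stored in a pair of indices. -/
def Item.Recorded (L R : Index) : Item → Prop
  | .edge σ w c u => (c, u) ∈ (entry L R σ w).edges
  | .wait σ w s v => (s, v) ∈ (entry L R σ w).waits

theorem boolRec_eq_true {x y b : Bool} : Bool.rec (motive := fun _ => Bool) x y b = true ↔
    b = true ∧ y = true ∨ b = false ∧ x = true := by
  cases b <;> simp

theorem State.eq_of_beq {s t : State} (h : s.beq t = true) : s = t := by
  cases s <;> cases t <;> first | rfl | cases h

theorem mem_of_memEdge {c u : ℕ} {es : List (ℕ × ℕ)} (h : memEdge c u es = true) :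
    (c, u) ∈ es := by
  induction es with
  | nil => cases h
  | cons e es ih =>
    change Bool.rec _ (Bool.rec _ true (Nat.beq e.2 u)) (Nat.beq e.1 c) = true at h
    rcases boolRec_eq_true.mp h with ⟨hc, h⟩ | ⟨-, h⟩
    · rcases boolRec_eq_true.mp h with ⟨hu, -⟩ | ⟨-, h⟩
      · rw [← Nat.eq_of_beq_eq_true hc, ← Nat.eq_of_beq_eq_true hu]
        exact .head _
      · exact .tail _ (ih h)
    · exact .tail _ (ih h)

theorem mem_of_memWait {s : State} {v : ℕ} {ws : List (State × ℕ)} (h : memWait s v ws = true) :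
    (s, v) ∈ ws := by
  induction ws with
  | nil => cases h
  | cons e ws ih =>
    change Bool.rec _ (Bool.rec _ true (State.beq s e.1)) (Nat.beq e.2 v) = true at h
    rcases boolRec_eq_true.mp h with ⟨hv, h⟩ | ⟨-, h⟩
    · rcases boolRec_eq_true.mp h with ⟨hs, -⟩ | ⟨-, h⟩
      · rw [← Nat.eq_of_beq_eq_true hv, State.eq_of_beq hs]
        exact .head _
      · exact .tail _ (ih h)
    · exact .tail _ (ih h)

section Join

variable {C : Coding} {T : Table} {σ : Side} {c u v : ℕ} {s : State} {k : List Item → Bool}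
  {l : List Item}

theorem exists_of_join (h : join C T σ c u k s v l = true) : ∃ l', k l' = true ∧ l ⊆ l' ∧
    ∀ S : Set Item, (∀ f ∈ l', f ∈ S) → Joined T S σ c u s v := by
  have hderive (a b : ℕ) (ha : a = if Turing.Dir.left = σ then u else v)
      (hb : b = if Turing.Dir.right = σ then u else v)
      (h : derive C s c a b k l (T.get s (odd c)) = true) :
      ∃ l', k l' = true ∧ l ⊆ l' ∧
        ∀ S : Set Item, (∀ f ∈ l', f ∈ S) → Joined T S σ c u s v := by
    rcases hi : T.get s (odd c) with _ | ⟨x, d, t⟩ | _ <;> rw [hi] at h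
    · cases h
    · cases d <;>
        refine ⟨_, h, fun _ hf => .tail _ (.tail _ hf), fun S hS =>
          ⟨C.cell s c x, _, _, t, by rw [hi, C.odd_cell], ha ▸ hb ▸ hS _ (.head _), ?_⟩⟩
      · exact hb ▸ hS _ (.tail _ (.head _))
      · exact ha ▸ hS _ (.tail _ (.head _))
    · cases h
  cases σ with
  | left => exact hderive u v rfl rfl h
  | right => exact hderive v u rfl rfl h

theorem exists_of_joinEdge {ws : List (State × ℕ)} (h : joinEdge C T σ c u ws k l = true) :
    ∃ l', k l' = true ∧ l ⊆ l' ∧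
      ∀ S : Set Item, (∀ f ∈ l', f ∈ S) → ∀ p ∈ ws, Joined T S σ c u p.1 p.2 := by
  induction ws generalizing l with
  | nil => exact ⟨l, h, List.Subset.refl l, fun _ _ _ hp => absurd hp List.not_mem_nil⟩
  | cons p ws ih =>
    obtain ⟨l₁, h₁, hl₁, hp⟩ := exists_of_join (s := p.1) (v := p.2) h
    obtain ⟨l₂, h₂, hl₂, hws⟩ := ih h₁
    exact ⟨l₂, h₂, List.Subset.trans hl₁ hl₂, fun S hS => List.forall_mem_cons.mpr
      ⟨hp S fun f hf => hS f (hl₂ hf), hws S hS⟩⟩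

theorem exists_of_joinWait {es : List (ℕ × ℕ)} (h : joinWait C T σ s v es k l = true) :
    ∃ l', k l' = true ∧ l ⊆ l' ∧
      ∀ S : Set Item, (∀ f ∈ l', f ∈ S) → ∀ p ∈ es, Joined T S σ p.1 p.2 s v := by
  induction es generalizing l with
  | nil => exact ⟨l, h, List.Subset.refl l, fun _ _ _ hp => absurd hp List.not_mem_nil⟩
  | cons p es ih =>
    obtain ⟨l₁, h₁, hl₁, hp⟩ := exists_of_join (c := p.1) (u := p.2) h
    obtain ⟨l₂, h₂, hl₂, hes⟩ := ih h₁
    exact ⟨l₂, h₂, List.Subset.trans hl₁ hl₂, fun S hS => List.forall_mem_cons.mpr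
      ⟨hp S fun f hf => hS f (hl₂ hf), hes S hS⟩⟩

end Join

/-- Some set of items contains the recorded items and the queue `l` and is closed under joining,
except perhaps that of two recorded items. -/
def Saturable (T : Table) (L R : Index) (l : List Item) : Prop :=
  ∃ S : Set Item, (∀ f, f.Recorded L R → f ∈ S) ∧ (∀ f ∈ l, f ∈ S) ∧
    ∀ σ w c u s v, .edge σ w c u ∈ S → .wait σ w s v ∈ S →
      (Item.edge σ w c u).Recorded L R ∧ (Item.wait σ w s v).Recorded L R ∨ Joined T S σ c u s v

section Saturable

variable {T : Table} {L R L' R' : Index} {l l' : List Item} {f : Item}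

theorem Saturable.of_recorded (h : Saturable T L R l) (hf : f.Recorded L R) :
    Saturable T L R (f :: l) := by
  obtain ⟨S, hrec, hl, hS⟩ := h
  exact ⟨S, hrec, List.forall_mem_cons.mpr ⟨hrec f hf, hl⟩, hS⟩

theorem exists_of_putEntry {σ : Side} {w : ℕ} {k : Saturation} {e : Entry}
    (h : putEntry σ w L R k e l = true) : ∃ L' R', k L' R' l = true ∧
      ∀ ρ v, entry L' R' ρ v = if ρ = σ ∧ v = w then e else entry L R ρ v := by
  have hset (I : Index) (v : ℕ) : I.set w e v = if v = w then e else I v := by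
    unfold Index.set
    cases hv : Nat.beq w v with
    | true => rw [if_pos (Nat.eq_of_beq_eq_true hv).symm]
    | false => rw [if_neg (Ne.symm (Nat.ne_of_beq_eq_false hv))]
  cases σ with
  | left => exact ⟨_, _, h, fun ρ v => by cases ρ <;> simp [entry, hset]⟩
  | right => exact ⟨_, _, h, fun ρ v => by cases ρ <;> simp [entry, hset]⟩

/-- The pairs that the new item `f` forms with recorded items are joined in the queue `l'`. -/
theorem Saturable.of_new (h : Saturable T L' R' l')
    (hrec : ∀ g : Item, g.Recorded L' R' ↔ g = f ∨ g.Recorded L R) (hl : l ⊆ l')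
    (hjoin : ∀ S : Set Item, (∀ g ∈ l', g ∈ S) → ∀ σ w c u s v,
      Item.edge σ w c u = f ∧ (Item.wait σ w s v).Recorded L R ∨
        (Item.edge σ w c u).Recorded L R ∧ Item.wait σ w s v = f → Joined T S σ c u s v) :
    Saturable T L R (f :: l) := by
  obtain ⟨S, hrecS, hl', hS⟩ := h
  refine ⟨S, fun g hg => hrecS g ((hrec g).mpr (.inr hg)), List.forall_mem_cons.mpr
    ⟨hrecS f ((hrec f).mpr (.inl rfl)), fun g hg => hl' g (hl hg)⟩, fun σ w c u s v he hw => ?_⟩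
  rcases hS σ w c u s v he hw with ⟨he', hw'⟩ | hjoined
  · rcases (hrec _).mp he' with hef | he' <;> rcases (hrec _).mp hw' with hwf | hw'
    · cases hef.trans hwf.symm
    · exact .inr (hjoin S hl' _ _ _ _ _ _ (.inl ⟨hef, hw'⟩))
    · exact .inr (hjoin S hl' _ _ _ _ _ _ (.inr ⟨he', hwf⟩))
    · exact .inl ⟨he', hw'⟩
  · exact .inr hjoined

section Add

variable {C : Coding} {σ : Side} {w : ℕ} {k : Saturation}
  (hk : ∀ L R l, k L R l = true → Saturable T L R l)
include hk

theorem saturable_of_addEdge {c u : ℕ} (h : addEdge C T σ w c u L R k l (entry L R σ w).edges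
    (entry L R σ w).waits = true) : Saturable T L R (.edge σ w c u :: l) := by
  rcases boolRec_eq_true.mp h with ⟨hmem, h⟩ | ⟨-, h⟩
  · exact (hk L R l h).of_recorded (mem_of_memEdge hmem)
  · obtain ⟨l', hput, hl, hjoin⟩ := exists_of_joinEdge h
    obtain ⟨L', R', hsat, hentry⟩ := exists_of_putEntry hput
    refine (hk L' R' l' hsat).of_new (fun g => ?_) hl ?_
    · cases g <;> simp only [Item.Recorded, hentry] <;> split_ifs with heq <;> grind
    · rintro S hS σ' w' c' u' s v (⟨hf, hrec⟩ | ⟨-, hf⟩)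
      · cases hf
        exact hjoin S hS _ hrec
      · cases hf

theorem saturable_of_addWait {s : State} {v : ℕ} (h : addWait C T σ w s v L R k l
    (entry L R σ w).edges (entry L R σ w).waits = true) : Saturable T L R (.wait σ w s v :: l) := by
  rcases boolRec_eq_true.mp h with ⟨hmem, h⟩ | ⟨-, h⟩
  · exact (hk L R l h).of_recorded (mem_of_memWait hmem)
  · obtain ⟨l', hput, hl, hjoin⟩ := exists_of_joinWait h
    obtain ⟨L', R', hsat, hentry⟩ := exists_of_putEntry hput
    refine (hk L' R' l' hsat).of_new (fun g => ?_) hl ?_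
    · cases g <;> simp only [Item.Recorded, hentry] <;> split_ifs with heq <;> grind
    · rintro S hS σ' w' c u s' v' (⟨hf, -⟩ | ⟨hrec, hf⟩)
      · cases hf
      · cases hf
        exact hjoin S hS _ hrec

end Add

theorem saturable_of_saturate {C : Coding} {n : ℕ} (h : saturate C T n L R l = true) :
    Saturable T L R l := by
  induction n generalizing L R l with
  | zero => cases h
  | succ n ih =>
    rcases l with _ | ⟨f, l⟩
    · exact ⟨{f | f.Recorded L R}, fun _ => id, fun _ hf => absurd hf List.not_mem_nil,
        fun _ _ _ _ _ _ he hw => .inl ⟨he, hw⟩⟩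
    · cases f with
      | edge => exact saturable_of_addEdge (fun _ _ _ => ih) h
      | wait => exact saturable_of_addWait (fun _ _ _ => ih) h

end Saturable

theorem diverges_of_saturates {T : Table} {m : Machine State} (hT : T.Agrees m fun _ _ => False)
    {C : Coding} (h : saturates T C = true) : Diverges m (start .a) := by
  obtain ⟨S, -, hl, hS⟩ := saturable_of_saturate h
  have hedge (σ : Side) : .edge σ 0 0 0 ∈ S := by
    cases σ <;> exact hl _ (by simp)
  have hwait : .wait .right 0 .a 0 ∈ S := hl _ (by simp)
  have hstart : Describes S (start .a) :=
    ⟨.right, 0, 0, hwait, Stream'.const_eq false ▸ stack_const (hedge _), stack_const (hedge _)⟩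
  refine diverges_of_joined hT hstart fun σ w c u s v he hw => ?_
  refine (hS σ w c u s v he hw).resolve_left fun hrec => ?_
  cases σ <;> exact List.not_mem_nil hrec.1

theorem diverges_of_nonhalting {T : Table} {m : Machine State} (hT : T.Agrees m fun _ _ => False)
    (h : T.nonhalting = true) : Diverges m (start .a) := by
  suffices ∃ C, saturates T C = true from this.elim fun _ => diverges_of_saturates hT
  change List.rec false (fun C _ ih => Bool.rec ih true (saturates T C)) codings = true at h
  generalize codings = Cs at h
  induction Cs with
  | nil => cases h
  | cons C Cs ih =>
    rcases boolRec_eq_true.mp h with ⟨hC, -⟩ | ⟨-, h⟩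
    · exact ⟨C, hC⟩
    · exact ih h

end Saturation

section Search

/-- The number of ones on a half-tape plus an initial value. -/
noncomputable def Half.ones (H : Half) : ℕ → ℕ :=
  List.rec (fun n => n) (fun x _ ih n => Bool.rec (ih n) (ih (Nat.succ n)) x) H.toList

/-- A node of the search tree: a partial table together with a configuration that its extensions
reach. If `sym` is set, then exchanging the states `c` and `d` does not affect the table. -/
structure Node where
  sym : Bool
  table : Table
  state : State
  scanned : Bool
  left : Half
  right : Half

/-- The nodes for the four instructions that lead to the state `t`, followed by `acc`. -/
noncomputable def branch (t : State) (f : Instr → Node) (acc : List Node) : List Node :=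
  .cons (f (.move false .left t)) <| .cons (f (.move true .left t)) <|
    .cons (f (.move false .right t)) <| .cons (f (.move true .right t)) acc

/-- The nodes for all instructions, up to the exchange of `c` and `d` if `sym` is set. Once `c` or
`d` has been used, that symmetry is lost. -/
noncomputable def branches (sym : Bool) (f : Bool → Instr → Node) : List Node :=
  branch .a (f sym) <| branch .b (f sym) <| branch .c (f false) <|
    Bool.rec (branch .d (f false) .nil) .nil sym

/-- `i` is undefined or `rest` holds. -/
noncomputable def Instr.isOpen (i : Instr) (rest : Bool) : Bool :=
  Instr.rec true (fun _ _ _ => rest) (fun _ _ => rest) i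

/-- The row has an undefined instruction or `rest` holds. -/
noncomputable def Row.isOpen (r : Row) (rest : Bool) : Bool :=
  Row.rec (fun i₀ i₁ => i₀.isOpen (i₁.isOpen rest)) r

/-- The table has an undefined instruction. -/
noncomputable def Table.isOpen (T : Table) : Bool :=
  Table.rec (fun a b c d => a.isOpen (b.isOpen (c.isOpen (d.isOpen false)))) T

/-- The children of a node whose simulation has arrived at an undefined instruction, with `n` ones
off the scanned cell, when other instructions are undefined too. A node that violates the bound, or
arrives at `c` or `d` while `sym` is set, becomes its own child, so that the search fails. -/
noncomputable def Node.openHit (p : Node) (s : State) (x : Bool) (L R : Half) (n : ℕ) :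
    List Node :=
  Bool.rec (.cons p .nil) (branches p.sym fun sym i => ⟨sym, p.table.set s x i, s, x, L, R⟩)
    (band (Nat.ble n 11) (Bool.rec true (State.rec true true false false s) p.sym))

/-- As `openHit`, but when no other instruction is undefined: extending the table further would only
give machines that never halt. -/
noncomputable def Node.lastHit (p : Node) (x : Bool) (n : ℕ) : List Node :=
  Bool.rec (Bool.rec (.cons p .nil) (Bool.rec .nil (.cons p .nil) x) (Nat.ble n 12)) .nil
    (Nat.ble n 11)

/-- The children of a node whose simulation has arrived at an undefined instruction. -/
noncomputable def Node.hit (p : Node) (s : State) (x : Bool) (L R : Half) : List Node :=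
  Bool.rec (p.lastHit x (L.ones (R.ones 0))) (p.openHit s x L R (L.ones (R.ones 0)))
    (p.table.set s x (.probe .undefined)).isOpen

/-- The children of a node whose short simulation has run out of steps. -/
noncomputable def Node.retry (p : Node) (s : State) (x : Bool) (L R : Half) : List Node :=
  Bool.rec (Outcome.rec .nil p.hit (fun _ _ _ _ => .cons p .nil) (phase p.table 60 s x L R)) .nil
    p.table.nonhalting

/-- A short simulation in two phases. -/
noncomputable def simulate (T : Table) (s : State) (x : Bool) (L R : Half) : Outcome :=
  Outcome.rec .loop .undefined (phase T 30) (phase T 15 s x L R)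

/-- The nodes that remain to be examined in order to settle `p`. -/
noncomputable def Node.children (p : Node) : List Node :=
  Node.rec (fun sym T s x L R => Outcome.rec .nil (Node.hit ⟨sym, T, s, x, L, R⟩)
    (Node.retry ⟨sym, T, s, x, L, R⟩) (simulate T s x L R)) p

/-- The search tree below a node has depth less than `n`. -/
noncomputable def search (n : ℕ) : Node → Bool :=
  Nat.rec (fun _ => false)
    (fun _ ih p => List.rec true (fun y _ r => band (ih y) r) p.children) n

theorem Half.ones_eq (H : Half) (n : ℕ) : H.ones n = H.toList.count true + n := by
  unfold Half.ones
  generalize H.toList = l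
  induction l generalizing n with
  | nil => exact (Nat.zero_add n).symm
  | cons x l ih =>
    cases x with
    | false => exact ih n
    | true => exact (ih (n + 1)).trans (by rw [List.count_cons_self]; omega)

theorem encard_append_const_le (l : List Bool) :
    {n | (l ++ₛ Stream'.const false) n = true}.encard ≤ l.count true := by
  induction l with
  | nil => exact (Set.encard_eq_zero.mpr (Set.eq_empty_of_forall_notMem fun n h => by cases h)).le
  | cons x l ih =>
    set S := {n | (l ++ₛ Stream'.const false) n = true}
    have himage : (Nat.succ '' S).encard ≤ l.count true := (Set.encard_image_le _ _).trans ih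
    cases x with
    | false =>
      refine (Set.encard_le_encard (t := Nat.succ '' S) fun n hn => ?_).trans himage
      cases n with
      | zero => cases hn
      | succ n => exact ⟨n, hn, rfl⟩
    | true =>
      refine (Set.encard_le_encard (t := insert 0 (Nat.succ '' S)) fun n hn => ?_).trans ?_
      · cases n with
        | zero => exact .inl rfl
        | succ n => exact .inr ⟨n, hn, rfl⟩
      · rw [List.count_cons_self, Nat.cast_succ]
        exact (Set.encard_insert_le _ _).trans (add_le_add_left himage 1)

theorem ones_le (s : State) (x : Bool) (L R : Half) :
    (⟨s, x, L.stream, R.stream⟩ : Config State).ones ≤ L.ones (R.ones 0) := by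
  rw [L.ones_eq, R.ones_eq, add_zero, Nat.cast_add]
  exact add_le_add (encard_append_const_le _) (encard_append_const_le _)

theorem bounded_of_diverges {Q : Type*} {m : Machine Q} {q : Q} (h : Diverges m (start q)) :
    Bounded m q :=
  fun _ hk => absurd (Part.dom_iff_mem.mpr ⟨_, hk⟩) h

theorem bounded_of_reaches {Q : Type*} {m : Machine Q} {q : Q} {k : Config Q}
    (hk : Reaches (step m) (start q) k) (hm : m k.state k.scanned = none) (h : WithinBound m k) :
    Bounded m q :=
  fun _ hk' => Part.mem_unique (mem_eval.mpr ⟨hk, step_eq_none.mpr hm⟩) hk' ▸ h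

/-- The machine `m` is among those that the search has yet to examine at the node `p`. -/
structure Node.Represents (p : Node) (m : Machine State) : Prop where
  agrees : p.table.Agrees m fun _ _ => False
  reaches : Reaches (step m) (start .a) ⟨p.state, p.scanned, p.left.stream, p.right.stream⟩
  symm : p.sym = true → p.table.Agrees (m.relabel (Equiv.swap .c .d)) fun _ _ => False

variable {p : Node} {m : Machine State} {s : State} {x : Bool} {L R : Half}

theorem simulate_sound {T : Table} (hT : T.Agrees m fun _ _ => False)
    (hk : Reaches (step m) (start .a) ⟨s, x, L.stream, R.stream⟩) :
    (simulate T s x L R).Sound m := by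
  unfold simulate
  have h15 := phase_sound hT 15 hk
  rcases hphase : phase T 15 s x L R with _ | _ | _ <;> rw [hphase] at h15
  · exact h15
  · exact h15
  · exact phase_sound hT 30 h15

theorem mem_branch (t : State) (f : Instr → Node) (acc : List Node) (w : Bool) (d : Side) :
    f (.move w d t) ∈ branch t f acc := by
  cases w <;> cases d <;> simp [branch]

theorem mem_branch_of_mem {t : State} {f : Instr → Node} {acc : List Node} {y : Node}
    (h : y ∈ acc) : y ∈ branch t f acc :=
  .tail _ (.tail _ (.tail _ (.tail _ h)))

theorem Node.Represents.extend (h : p.Represents m)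
    (hk : Reaches (step m) (start .a) ⟨s, x, L.stream, R.stream⟩) {w : Bool} {d : Side} {t : State}
    (hm : m s x = some (w, d, t)) {sym : Bool} (hsym : sym = true → p.sym = true ∧
      Equiv.swap State.c State.d s = s ∧ Equiv.swap State.c State.d t = t) :
    (⟨sym, p.table.set s x (.move w d t), s, x, L, R⟩ : Node).Represents m where
  agrees := h.agrees.set (fun _ _ => id) hm
  reaches := hk
  symm hs := by
    obtain ⟨hp, hs, ht⟩ := hsym hs
    exact (h.symm hp).set (fun _ _ => id) (by rw [← hs, Machine.relabel_eq_some _ hm, ht]; rfl)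

theorem Node.Represents.bounded_of_swap (h : p.Represents m)
    (hk : Reaches (step m) (start .a) ⟨s, x, L.stream, R.stream⟩) (hp : p.sym = true)
    (hs : Equiv.swap State.c State.d s = s) {w : Bool} {d : Side} (hm : m s x = some (w, d, .d))
    (hc : ∀ m', (⟨false, p.table.set s x (.move w d .c), s, x, L, R⟩ : Node).Represents m' →
      Bounded m' .a) : Bounded m .a := by
  have hk' : Reaches (step (m.relabel (Equiv.swap .c .d))) (start .a)
      ⟨s, x, L.stream, R.stream⟩ := by
    have h := reaches_relabel (Equiv.swap State.c State.d) hk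
    rwa [show Config.relabel (Equiv.swap State.c State.d) ⟨s, x, L.stream, R.stream⟩ = _ from
      congrArg (Config.mk · x L.stream R.stream) hs] at h
  have h' : (⟨false, p.table, s, x, L, R⟩ : Node).Represents (m.relabel (Equiv.swap .c .d)) :=
    ⟨h.symm hp, hk', nofun⟩
  have hm' : m.relabel (Equiv.swap .c .d) s x = some (w, d, .c) :=
    hs ▸ Machine.relabel_eq_some (Equiv.swap .c .d) hm
  exact .of_relabel (Equiv.swap .c .d) (hc _ (h'.extend hk' hm' nofun))

theorem Node.Represents.bounded_of_openHit (h : p.Represents m)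
    (hk : Reaches (step m) (start .a) ⟨s, x, L.stream, R.stream⟩)
    (hc : ∀ y ∈ p.openHit s x L R (L.ones (R.ones 0)), ∀ m', y.Represents m' → Bounded m' .a) :
    Bounded m .a := by
  unfold Node.openHit at hc
  cases hbound : band (Nat.ble (L.ones (R.ones 0)) 11)
    (Bool.rec true (State.rec true true false false s) p.sym) <;> rw [hbound] at hc
  · exact hc p (.head _) m h
  obtain ⟨h11, hsym⟩ := band_eq_true.mp hbound
  have hfix (hp : p.sym = true) : Equiv.swap State.c State.d s = s := by
    rw [hp] at hsym
    cases s <;> first | rfl | cases hsym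
  rcases hm : m s x with _ | ⟨w, d, t⟩
  · exact bounded_of_reaches hk hm
      (.inl ((ones_le s x L R).trans (mod_cast Nat.le_of_ble_eq_true h11)))
  cases t with
  | a =>
    exact hc _ (mem_branch _ _ _ w d) m (h.extend hk hm fun hp => ⟨hp, hfix hp, rfl⟩)
  | b =>
    exact hc _ (mem_branch_of_mem (mem_branch _ _ _ w d)) m
      (h.extend hk hm fun hp => ⟨hp, hfix hp, rfl⟩)
  | c =>
    exact hc _ (mem_branch_of_mem (mem_branch_of_mem (mem_branch _ _ _ w d))) m
      (h.extend hk hm nofun)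
  | d =>
    cases hp : p.sym with
    | false =>
      rw [hp] at hc
      exact hc _
        (mem_branch_of_mem (mem_branch_of_mem (mem_branch_of_mem (mem_branch _ _ _ w d)))) m
        (h.extend hk hm (sym := false) nofun)
    | true =>
      exact h.bounded_of_swap hk hp (hfix hp) hm
        (hc _ (mem_branch_of_mem (mem_branch_of_mem (mem_branch _ _ _ w d))))

theorem Instr.isOpen_eq_false {i : Instr} {rest : Bool} :
    i.isOpen rest = false ↔ i ≠ .undefined ∧ rest = false := by
  cases i <;> simp [Instr.isOpen]

theorem Table.get_ne_undefined {T : Table} (h : T.isOpen = false) (s : State) (x : Bool) :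
    T.get s x ≠ .undefined := by
  obtain ⟨⟨_, _⟩, ⟨_, _⟩, ⟨_, _⟩, ⟨_, _⟩⟩ := T
  simp only [Table.isOpen, Row.isOpen, Instr.isOpen_eq_false] at h
  obtain ⟨ha₀, ha₁, hb₀, hb₁, hc₀, hc₁, hd₀, hd₁, -⟩ := h
  cases s <;> cases x <;> assumption

theorem Table.Agrees.eq_of_eq_none {T : Table} (h : T.Agrees m fun _ _ => False)
    (hclosed : (T.set s x (.probe .undefined)).isOpen = false) {s' : State} {x' : Bool}
    (hm : m s' x' = none) : s' = s ∧ x' = x := by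
  by_contra hne
  have hdef := Table.get_ne_undefined hclosed s' x'
  rw [Table.get_set, if_neg hne] at hdef
  have hagree := h s' x'
  rw [hm] at hagree
  rcases hi : T.get s' x' with _ | _ | _ <;> rw [hi] at hagree
  · exact hdef hi
  · cases hagree
  · exact hagree.1

theorem Node.le_of_notMem_lastHit {n : ℕ} (h : p ∉ p.lastHit x n) :
    n ≤ 11 ∨ n ≤ 12 ∧ x = false := by
  unfold Node.lastHit at h
  cases h11 : Nat.ble n 11 with
  | true => exact .inl (Nat.le_of_ble_eq_true h11)
  | false =>
    cases h12 : Nat.ble n 12 <;> cases x <;> simp only [h11, h12, List.mem_singleton] at h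
    · exact absurd trivial h
    · exact absurd trivial h
    · exact .inr ⟨Nat.le_of_ble_eq_true h12, rfl⟩
    · exact absurd trivial h

theorem Node.Represents.bounded_of_lastHit (h : p.Represents m)
    (hk : Reaches (step m) (start .a) ⟨s, x, L.stream, R.stream⟩)
    (hclosed : (p.table.set s x (.probe .undefined)).isOpen = false)
    (hc : ∀ y ∈ p.lastHit x (L.ones (R.ones 0)), ∀ m', y.Represents m' → Bounded m' .a) :
    Bounded m .a := by
  by_cases hp : p ∈ p.lastHit x (L.ones (R.ones 0))
  · exact hc p hp m h
  intro k hk'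
  have hnone : m k.state k.scanned = none := step_eq_none.mp (mem_eval.mp hk').2
  obtain ⟨hs, hx⟩ := h.agrees.eq_of_eq_none hclosed hnone
  have hones := ones_le s x L R
  refine bounded_of_reaches hk (hs ▸ hx ▸ hnone) ?_ k hk'
  rcases Node.le_of_notMem_lastHit hp with hle | ⟨hle, hzero⟩
  · exact .inl (hones.trans (mod_cast hle))
  · exact .inr ⟨hones.trans (mod_cast hle), hzero, fun _ _ => h.agrees.eq_of_eq_none hclosed⟩

theorem Node.Represents.bounded_of_hit (h : p.Represents m)
    (hk : Reaches (step m) (start .a) ⟨s, x, L.stream, R.stream⟩)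
    (hc : ∀ y ∈ p.hit s x L R, ∀ m', y.Represents m' → Bounded m' .a) : Bounded m .a := by
  unfold Node.hit at hc
  cases hopen : (p.table.set s x (.probe .undefined)).isOpen with
  | false => exact h.bounded_of_lastHit hk hopen (by rwa [hopen] at hc)
  | true => exact h.bounded_of_openHit hk (by rwa [hopen] at hc)

theorem Node.Represents.bounded_of_retry (h : p.Represents m)
    (hk : Reaches (step m) (start .a) ⟨s, x, L.stream, R.stream⟩)
    (hc : ∀ y ∈ p.retry s x L R, ∀ m', y.Represents m' → Bounded m' .a) : Bounded m .a := by
  unfold Node.retry at hc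
  cases hnon : p.table.nonhalting with
  | true => exact bounded_of_diverges (diverges_of_nonhalting h.agrees hnon)
  | false =>
    rw [hnon] at hc
    have hsound := phase_sound h.agrees 60 hk
    rcases hphase : phase p.table 60 s x L R with _ | _ | _ <;> rw [hphase] at hsound hc
    · exact bounded_of_diverges hsound
    · exact h.bounded_of_hit hsound hc
    · exact hc p (.head _) m h

theorem Node.Represents.bounded_of_children (h : p.Represents m)
    (hc : ∀ y ∈ p.children, ∀ m', y.Represents m' → Bounded m' .a) : Bounded m .a := by
  change ∀ y ∈ (Outcome.rec [] p.hit p.retry _ : List Node), _ at hc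
  have hsound := simulate_sound h.agrees h.reaches
  rcases houtcome : simulate p.table p.state p.scanned p.left p.right with _ | _ | _ <;>
    rw [houtcome] at hsound hc
  · exact bounded_of_diverges hsound
  · exact h.bounded_of_hit hsound hc
  · exact h.bounded_of_retry hsound hc

theorem bounded_of_search {n : ℕ} (hp : search n p = true) (h : p.Represents m) :
    Bounded m .a := by
  induction n generalizing p m with
  | zero => cases hp
  | succ n ih =>
    refine h.bounded_of_children fun y hy m' => ih ?_
    change List.rec true (fun y _ r => band (search n y) r) p.children = true at hp
    generalize p.children = l at hp hy
    induction hy with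
    | head => exact (band_eq_true.mp hp).1
    | tail _ _ ih => exact ih (band_eq_true.mp hp).2

end Search

section Verification

/-- The machines that start with `1`, a move to the right and the state `t`. -/
noncomputable def root (t : State) : Node where
  sym := true
  table := ⟨⟨.move true .right t, .undefined⟩, ⟨.undefined, .undefined⟩,
    ⟨.undefined, .undefined⟩, ⟨.undefined, .undefined⟩⟩
  state := .a
  scanned := false
  left := .mark [] []
  right := .mark [] []

/-- The nodes two levels below the roots. -/
noncomputable def frontier : List Node :=
  ([root .a, root .b].flatMap Node.children).flatMap Node.children

set_option maxRecDepth 1000000 in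
theorem length_frontier_le : frontier.length ≤ 112 := by decide +kernel

set_option maxRecDepth 1000000 in
set_option maxHeartbeats 0 in
-- One kernel computation for each node: the memory taken by the reductions is released in between.
theorem search_getElem?_frontier {i : ℕ} (hi : i < 112) :
    (frontier[i]?).all (search 6) = true := by
  interval_cases i <;> decide +kernel

theorem search_of_mem_frontier {p : Node} (hp : p ∈ frontier) : search 6 p = true := by
  obtain ⟨i, hi, rfl⟩ := List.getElem_of_mem hp
  have h := search_getElem?_frontier (hi.trans_le length_frontier_le)
  rwa [List.getElem?_eq_getElem hi] at h

theorem root_represents {m : Machine State} {t : State} (hm : m .a false = some (true, .right, t))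
    (ht : Equiv.swap State.c State.d t = t) : (root t).Represents m where
  agrees s x := by cases s <;> cases x <;> first | exact hm | trivial
  reaches := .refl
  symm _ s x := by
    have hm' : m.relabel (Equiv.swap .c .d) .a false = some (true, .right, t) :=
      (Machine.relabel_eq_some (Equiv.swap .c .d) hm).trans (by rw [ht])
    cases s <;> cases x <;> first | exact hm' | trivial

theorem bounded_of_root {m : Machine State} {t : State} (ht : t = .a ∨ t = .b)
    (hm : m .a false = some (true, .right, t)) : Bounded m .a := by
  have hfix : Equiv.swap State.c State.d t = t := by rcases ht with rfl | rfl <;> rfl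
  have hroot : root t ∈ [root .a, root .b] := by rcases ht with rfl | rfl <;> simp
  refine (root_represents hm hfix).bounded_of_children fun y hy m' hm' => ?_
  refine hm'.bounded_of_children fun z hz m'' => bounded_of_search (search_of_mem_frontier ?_)
  exact List.mem_flatMap.mpr ⟨y, List.mem_flatMap.mpr ⟨root t, hroot, hy⟩, hz⟩

theorem exists_perm_eq_a (s t : State) : ∃ e : State ≃ State, e s = .a ∧ (e t = .a ∨ e t = .b) := by
  obtain ⟨e, he⟩ : ∃ e : State ≃ State, e s = .a := ⟨Equiv.swap s .a, Equiv.swap_apply_left ..⟩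
  by_cases ht : e t = .a
  · exact ⟨e, he, .inl ht⟩
  · refine ⟨e.trans (Equiv.swap (e t) .b), ?_, .inr (Equiv.swap_apply_left ..)⟩
    rw [Equiv.trans_apply, he, Equiv.swap_apply_of_ne_of_ne (Ne.symm ht) (by nofun)]

theorem bounded_of_writes_true {m : Machine State} {s t : State} {d : Side}
    (hm : m s false = some (true, d, t)) : Bounded m s := by
  have hright {m : Machine State} (hm : m s false = some (true, .right, t)) : Bounded m s := by
    obtain ⟨e, hs, ht⟩ := exists_perm_eq_a s t
    exact .of_relabel e (hs ▸ bounded_of_root ht (hs ▸ Machine.relabel_eq_some e hm))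
  cases d with
  | left => exact .of_mirror (hright (by rw [Machine.mirror, hm]; rfl))
  | right => exact hright hm

-- The initial instructions that write a zero leave the tape blank.
theorem bounded (m : Machine State) (s : State) : Bounded m s := by
  intro k hk
  suffices h : ∀ c, k ∈ eval (step m) c → ∀ s, start s = c → WithinBound m k from h _ hk s rfl
  refine fun c hc => evalInduction hc fun c hk ih s hs => ?_
  subst hs
  rcases hm : m s false with _ | ⟨w, d, t⟩
  · have hones := ones_le s false (.mark [] []) (.mark [] [])
    exact bounded_of_reaches .refl hm (.inl (hones.trans (mod_cast Nat.zero_le 11))) k hk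
  · cases w with
    | false => exact ih _ ((step_of_eq_some hm).trans (congrArg _ (move_start d))) t rfl
    | true => exact bounded_of_writes_true hm k hk

end Verification

section Champion

/-- The four-state busy beaver: it writes twelve ones in 106 steps. -/
def champion : Fin 4 × Bool → Option (Fin 4 × Bool × Dir)
  | (0, false) => some (1, true, .right)
  | (0, true) => some (1, true, .left)
  | (1, false) => some (0, true, .left)
  | (1, true) => some (2, false, .left)
  | (2, false) => none
  | (2, true) => some (3, true, .left)
  | (3, false) => some (3, true, .right)
  | (3, true) => some (0, false, .right)

theorem tape_eq_of_stepsTM {Q : Type} {f : Q × Bool → Option (Q × Bool × Dir)} {t : ℕ}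
    {c₀ c : Cfg Q} (h : stepsTM f t c₀ = some c) {j : ℤ} (hj : t ≤ (j - c₀.head).natAbs) :
    c.tape j = c₀.tape j := by
  induction t generalizing c₀ with
  | zero => rw [Option.some.inj h]
  | succ t ih =>
    obtain ⟨c₁, hstep, hsteps⟩ := Option.bind_eq_some_iff.mp h
    obtain ⟨⟨q, x, d⟩, -, rfl⟩ := Option.map_eq_some_iff.mp hstep
    have hfar : t ≤ (j - (c₀.head + d.move)).natAbs := by
      cases d <;> simp only [Dir.move] <;> omega
    exact (ih hsteps hfar).trans (Function.update_of_ne (by rintro rfl; omega) _ _)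

set_option maxRecDepth 100000 in
theorem exists_stepsTM_champion : ∃ c ∈ stepsTM champion 106 (initCfg 0),
    (champion (c.state, c.tape c.head)).isNone ∧
      ∀ j ∈ Finset.Ioo (-106 : ℤ) 106, c.tape j = decide (-8 ≤ j ∧ j < 4) := by
  decide +kernel

theorem champion_computes : Computes champion 0 (.replicate 12 true) 106 := by
  obtain ⟨c, hc, hhalt, hnear⟩ := exists_stepsTM_champion
  have htape (j : ℤ) : c.tape j = decide (-8 ≤ j ∧ j < 4) := by
    by_cases hj : j ∈ Finset.Ioo (-106 : ℤ) 106
    · exact hnear j hj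
    · rw [Finset.mem_Ioo] at hj
      rw [tape_eq_of_stepsTM hc (show 106 ≤ (j - 0).natAbs by omega)]
      exact (decide_eq_false (by omega)).symm
  refine ⟨c, hc, Option.isNone_iff_eq_none.mp hhalt, -8, fun k hk => ?_, fun j hj => ?_,
    fun _ => ⟨rfl, rfl⟩⟩
  · rw [List.length_replicate] at hk
    rw [htape, List.getD_replicate _ hk]
    exact (decide_eq_true (by omega)).symm
  · exact of_decide_eq_true ((htape j).symm.trans hj)

end Champion

/-- The names of the states. -/
def stateEquiv : Fin 4 ≃ State where
  toFun := ![.a, .b, .c, .d]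
  invFun
    | .a => 0
    | .b => 1
    | .c => 2
    | .d => 3
  left_inv i := by fin_cases i <;> rfl
  right_inv s := by cases s <;> rfl

theorem count_true_le_twelve {Q : Type} (e : Q ≃ State) {f : Q × Bool → Option (Q × Bool × Dir)}
    {q : Q} {w : List Bool} {t : ℕ} (h : Computes f q w t) : w.count true ≤ 12 :=
  count_true_le_twelve_of_computes (.of_relabel e (bounded _ _)) h

end BusyBeaver

/-- BB(4) = 12: among all Turing machines with at most 4 states
(in the model without a separate halting state) that halt on the all-zero
tape, the maximum number of 1s in the computed word is exactly 12. -/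
theorem busy_beaver_4 :
    IsGreatest
      {m : ℕ |
        ∃ (f : Fin 4 × Bool → Option (Fin 4 × Bool × Dir)) (w : List Bool) (t : ℕ),
          Computes f 0 w t ∧ w.count true = m} 12 := by
  refine ⟨⟨BusyBeaver.champion, .replicate 12 true, 106, BusyBeaver.champion_computes, rfl⟩, ?_⟩
  rintro _ ⟨f, w, t, h, rfl⟩
  exact BusyBeaver.count_true_le_twelve BusyBeaver.stateEquiv h
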